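/- arXiv:2306.06616 — 7 statements merged into one kernel-verified Lean document; each statement's English description precedes it below -/
import Mathlib

section
/- Let C be a triangulated category, ((S, T), (U, V)) a twin cotorsion pair on C, and W = T ∩ U. Let A →x B →y C →δ A[1] be a distinguished triangle in which x is W-monic and y is W-epic. If A and C belong to H = B⁺ ∩ B⁻, then B belongs to H. -/
open CategoryTheory CategoryTheory.Limits CategoryTheory.Pretriangulated

universe v u

variable (C : Type u) [Category.{v} C] [Preadditive C] [HasZeroObject C] [HasShift C ℤ]
  [∀ n : ℤ, (shiftFunctor C n).Additive] [Pretriangulated C]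

/-- A class of objects is closed under isomorphisms. -/
def ClosedUnderIso (D : Set C) : Prop := ∀ ⦃X Y : C⦄, (X ≅ Y) → X ∈ D → Y ∈ D

/-- A class of objects is closed under direct summands (retracts). -/
def ClosedUnderSummands (D : Set C) : Prop :=
  ∀ ⦃X Y : C⦄, Y ∈ D → (∃ (i : X ⟶ Y) (p : Y ⟶ X), i ≫ p = 𝟙 X) → X ∈ D

/-- A cotorsion pair `(U, V)` on a triangulated category: both classes are closed under
isomorphisms and direct summands, `Hom(U, V[1]) = 0`, and every object `B` admits a
distinguished triangle `V₀ → U₀ → B → V₀[1]` with `U₀ ∈ U`, `V₀ ∈ V`. -/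
def CotorsionPair (U V : Set C) : Prop :=
  ClosedUnderIso C U ∧ ClosedUnderSummands C U ∧
  ClosedUnderIso C V ∧ ClosedUnderSummands C V ∧
  (∀ ⦃X Y : C⦄, X ∈ U → Y ∈ V → ∀ f : X ⟶ Y⟦(1 : ℤ)⟧, f = 0) ∧
  (∀ B : C, ∃ (V₀ U₀ : C), V₀ ∈ V ∧ U₀ ∈ U ∧
    ∃ (x : V₀ ⟶ U₀) (y : U₀ ⟶ B) (δ : B ⟶ V₀⟦(1 : ℤ)⟧),
      Triangle.mk x y δ ∈ distTriang C)

/-- A twin cotorsion pair `((S, T), (U, V))`: two cotorsion pairs with `S ⊆ U`. -/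
def TwinCotorsionPair (S T U V : Set C) : Prop :=
  CotorsionPair C S T ∧ CotorsionPair C U V ∧ S ⊆ U

/-- `x : A ⟶ B` is `W`-monic: every morphism from `A` to an object of `W` factors
through `x`. -/
def WMonic (W : Set C) {A B : C} (x : A ⟶ B) : Prop :=
  ∀ ⦃W₀ : C⦄, W₀ ∈ W → ∀ g : A ⟶ W₀, ∃ h : B ⟶ W₀, x ≫ h = g

/-- `y : B ⟶ X` is `W`-epic: every morphism from an object of `W` to `X` factors
through `y`. -/
def WEpic (W : Set C) {B X : C} (y : B ⟶ X) : Prop :=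
  ∀ ⦃W₀ : C⦄, W₀ ∈ W → ∀ g : W₀ ⟶ X, ∃ h : W₀ ⟶ B, h ≫ y = g

/-- `B⁺`-type class: objects `X` admitting a distinguished triangle `V₀ → W₀ → X → V₀[1]`
with `V₀ ∈ V` and `W₀ ∈ W`. -/
def Bplus (V W : Set C) : Set C :=
  {X | ∃ (V₀ W₀ : C), V₀ ∈ V ∧ W₀ ∈ W ∧
    ∃ (f : V₀ ⟶ W₀) (g : W₀ ⟶ X) (δ : X ⟶ V₀⟦(1 : ℤ)⟧),
      Triangle.mk f g δ ∈ distTriang C}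

/-- `B⁻`-type class: objects `Y` admitting a distinguished triangle `Y → W₀ → S₀ → Y[1]`
with `W₀ ∈ W` and `S₀ ∈ S`. -/
def Bminus (S W : Set C) : Set C :=
  {Y | ∃ (W₀ S₀ : C), W₀ ∈ W ∧ S₀ ∈ S ∧
    ∃ (f : Y ⟶ W₀) (g : W₀ ⟶ S₀) (δ : S₀ ⟶ Y⟦(1 : ℤ)⟧),
      Triangle.mk f g δ ∈ distTriang C}

/-- The heart `H = B⁺ ∩ B⁻` of a twin cotorsion pair. -/
def Heart (S V W : Set C) : Set C := Bplus C V W ∩ Bminus C S W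

/-- A morphism factors through an object of the class `W`. -/
def FactorsThruClass (W : Set C) {X Y : C} (f : X ⟶ Y) : Prop :=
  ∃ (W₀ : C), W₀ ∈ W ∧ ∃ (g : X ⟶ W₀) (h : W₀ ⟶ Y), g ≫ h = f

/-- `x : A ⟶ B` is left almost split: any morphism out of `A` which is not a section
factors through `x`. -/
def LeftAlmostSplit {A B : C} (x : A ⟶ B) : Prop :=
  ∀ ⦃M : C⦄ (a : A ⟶ M), (¬ ∃ r : M ⟶ A, a ≫ r = 𝟙 A) → ∃ m : B ⟶ M, x ≫ m = a

/-- `y : B ⟶ X` is right almost split: any morphism into `X` which is not a retraction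
factors through `y`. -/
def RightAlmostSplit {B X : C} (y : B ⟶ X) : Prop :=
  ∀ ⦃N : C⦄ (c : N ⟶ X), (¬ ∃ s : X ⟶ N, s ≫ c = 𝟙 X) → ∃ n : N ⟶ B, n ≫ y = c

/-- An almost split triangle: a nonsplit distinguished triangle whose first morphism is
left almost split and whose second morphism is right almost split. -/
def IsAlmostSplitTriangle {A B X : C} (x : A ⟶ B) (y : B ⟶ X)
    (δ : X ⟶ A⟦(1 : ℤ)⟧) : Prop :=
  (Triangle.mk x y δ ∈ distTriang C) ∧ δ ≠ 0 ∧
    LeftAlmostSplit C x ∧ RightAlmostSplit C y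

/-!
`X` lies in `B⁺` exactly when `Hom(S, -[1])` kills every morphism `U₀ ⟶ X` with `U₀ ∈ U`: such a
morphism factors through `W ⊆ T` because `Hom(U, V[1]) = 0`, and conversely the criterion, applied
to the triangle `V₀ ⟶ U₀ ⟶ X ⟶ V₀[1]` of the pair `(U, V)`, forces `U₀ ∈ T`, since `Hom(S, -)`
vanishes on `V₀[1]`. This condition passes to extensions along a `W`-epic `y : B ⟶ X`: a morphism
`b : U₀ ⟶ B` differs from one that factors through `W` by one that factors through `A`, because
`b ≫ y` factors through `W` and `y` is `W`-epic. The argument for `B⁻` is dual.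
-/

section

variable {C}

theorem exists_mor₁_comp_eq {K : Triangle C} (hK : K ∈ distTriang C) {Z : C} (t : K.obj₁ ⟶ Z)
    (ht : K.mor₃ ≫ t⟦(1 : ℤ)⟧' = 0) : ∃ r : K.obj₂ ⟶ Z, K.mor₁ ≫ r = t := by
  obtain ⟨r, hr, -⟩ := complete_distinguished_triangle_morphism₂ K _ hK
    (contractible_distinguished Z) t 0 (ht.trans zero_comp.symm)
  exact ⟨r, hr.trans (Category.comp_id t)⟩

theorem exists_distTriang_of_distTriang_shift {B Y Z : C} {f : Y ⟶ Z} {g : Z ⟶ B⟦(1 : ℤ)⟧}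
    {c : B⟦(1 : ℤ)⟧ ⟶ Y⟦(1 : ℤ)⟧} (hK : Triangle.mk f g c ∈ distTriang C) :
    ∃ i : B ⟶ Y, Triangle.mk i f g ∈ distTriang C := by
  obtain ⟨i, hi⟩ := (shiftFunctor C (1 : ℤ)).map_surjective (-c)
  obtain rfl : c = -i⟦(1 : ℤ)⟧' := by rw [hi, neg_neg]
  exact ⟨i, (rotate_distinguished_triangle _).2 hK⟩

namespace CotorsionPair

variable {U V : Set C} (h : CotorsionPair C U V)

include h

theorem hom_shift_eq_zero {X Y : C} (hX : X ∈ U) (hY : Y ∈ V) (f : X ⟶ Y⟦(1 : ℤ)⟧) : f = 0 :=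
  h.2.2.2.2.1 hX hY f

theorem exists_distTriang_to (B : C) :
    ∃ V₀ U₀ : C, V₀ ∈ V ∧ U₀ ∈ U ∧
      ∃ (f : V₀ ⟶ U₀) (g : U₀ ⟶ B) (d : B ⟶ V₀⟦(1 : ℤ)⟧), Triangle.mk f g d ∈ distTriang C :=
  h.2.2.2.2.2 B

theorem exists_distTriang_from (B : C) :
    ∃ V₀ U₀ : C, V₀ ∈ V ∧ U₀ ∈ U ∧
      ∃ (f : B ⟶ V₀) (g : V₀ ⟶ U₀) (d : U₀ ⟶ B⟦(1 : ℤ)⟧), Triangle.mk f g d ∈ distTriang C := by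
  obtain ⟨V₀, U₀, hV₀, hU₀, g, d, c, hK⟩ := h.exists_distTriang_to (B⟦(1 : ℤ)⟧)
  obtain ⟨f, hK'⟩ := exists_distTriang_of_distTriang_shift hK
  exact ⟨V₀, U₀, hV₀, hU₀, f, g, d, hK'⟩

theorem mem_left_of_hom_shift_eq_zero {Z : C}
    (hZ : ∀ ⦃V₀ : C⦄, V₀ ∈ V → ∀ f : Z ⟶ V₀⟦(1 : ℤ)⟧, f = 0) : Z ∈ U := by
  obtain ⟨V₀, U₀, hV₀, hU₀, f, g, d, hK⟩ := h.exists_distTriang_to Z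
  have hd : 𝟙 Z ≫ d = 0 := by rw [hZ hV₀ d, comp_zero]
  obtain ⟨s, hs⟩ : ∃ s : Z ⟶ U₀, 𝟙 Z = s ≫ g := Triangle.coyoneda_exact₃ _ hK (𝟙 Z) hd
  exact h.2.1 hU₀ ⟨s, g, hs.symm⟩

theorem mem_right_of_hom_shift_eq_zero {Z : C}
    (hZ : ∀ ⦃U₀ : C⦄, U₀ ∈ U → ∀ f : U₀ ⟶ Z⟦(1 : ℤ)⟧, f = 0) : Z ∈ V := by
  obtain ⟨V₀, U₀, hV₀, hU₀, f, g, d, hK⟩ := h.exists_distTriang_from Z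
  have hd : d ≫ (𝟙 Z)⟦(1 : ℤ)⟧' = 0 := by rw [hZ hU₀ d, zero_comp]
  obtain ⟨r, hr⟩ : ∃ r : V₀ ⟶ Z, f ≫ r = 𝟙 Z := exists_mor₁_comp_eq hK (𝟙 Z) hd
  exact h.2.2.2.1 hV₀ ⟨f, r, hr⟩

theorem factorsThruClass_of_mem_bplus {W : Set C} {X U₀ : C} (hX : X ∈ Bplus C V W)
    (hU₀ : U₀ ∈ U) (b : U₀ ⟶ X) : FactorsThruClass C W b := by
  obtain ⟨V₀, W₀, hV₀, hW₀, f, g, d, hK⟩ := hX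
  obtain ⟨p, hp⟩ := Triangle.coyoneda_exact₃ _ hK b (h.hom_shift_eq_zero hU₀ hV₀ (b ≫ d))
  exact ⟨W₀, hW₀, p, g, hp.symm⟩

theorem factorsThruClass_of_mem_bminus {W : Set C} {Y V₀ : C} (hY : Y ∈ Bminus C U W)
    (hV₀ : V₀ ∈ V) (a : Y ⟶ V₀) : FactorsThruClass C W a := by
  obtain ⟨W₀, U₀, hW₀, hU₀, f, g, d, hK⟩ := hY
  obtain ⟨p, hp⟩ := exists_mor₁_comp_eq hK a (h.hom_shift_eq_zero hU₀ hV₀ (d ≫ a⟦(1 : ℤ)⟧'))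
  exact ⟨W₀, hW₀, f, p, hp⟩

end CotorsionPair

section Extension

variable {W : Set C} {A B X Z : C} {x : A ⟶ B} {y : B ⟶ X} {δ : X ⟶ A⟦(1 : ℤ)⟧}

theorem WEpic.exists_eq_comp_add_comp (hy : WEpic C W y)
    (hdist : Triangle.mk x y δ ∈ distTriang C) {b : Z ⟶ B} (hb : FactorsThruClass C W (b ≫ y)) :
    ∃ W₀ ∈ W, ∃ (p : Z ⟶ W₀) (k : W₀ ⟶ B) (q : Z ⟶ A), b = p ≫ k + q ≫ x := by
  obtain ⟨W₀, hW₀, p, g, hpg⟩ := hb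
  obtain ⟨k, hk⟩ := hy hW₀ g
  have hker : (b - p ≫ k) ≫ y = 0 := by
    rw [Preadditive.sub_comp, Category.assoc, hk, hpg, sub_self]
  obtain ⟨q, hq⟩ := Triangle.coyoneda_exact₂ _ hdist (b - p ≫ k) hker
  exact ⟨W₀, hW₀, p, k, q, sub_eq_iff_eq_add'.1 hq⟩

theorem WMonic.exists_eq_comp_add_comp (hx : WMonic C W x)
    (hdist : Triangle.mk x y δ ∈ distTriang C) {a : B ⟶ Z} (ha : FactorsThruClass C W (x ≫ a)) :
    ∃ W₀ ∈ W, ∃ (k : B ⟶ W₀) (p : W₀ ⟶ Z) (q : X ⟶ Z), a = k ≫ p + y ≫ q := by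
  obtain ⟨W₀, hW₀, g, p, hgp⟩ := ha
  obtain ⟨k, hk⟩ := hx hW₀ g
  have hker : x ≫ (a - k ≫ p) = 0 := by
    rw [Preadditive.comp_sub, ← Category.assoc, hk, hgp, sub_self]
  obtain ⟨q, hq⟩ := Triangle.yoneda_exact₂ _ hdist (a - k ≫ p) hker
  exact ⟨W₀, hW₀, k, p, q, sub_eq_iff_eq_add'.1 hq⟩

end Extension

namespace TwinCotorsionPair

variable {S T U V : Set C} (h : TwinCotorsionPair C S T U V)

include h

theorem mem_bplus_iff {X : C} :
    X ∈ Bplus C V (T ∩ U) ↔ ∀ ⦃S₀ U₀ : C⦄, S₀ ∈ S → U₀ ∈ U →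
      ∀ (f : S₀ ⟶ U₀⟦(1 : ℤ)⟧) (b : U₀ ⟶ X), f ≫ b⟦(1 : ℤ)⟧' = 0 := by
  obtain ⟨hST, hUV, hSU⟩ := h
  constructor
  · intro hX S₀ U₀ hS₀ hU₀ f b
    obtain ⟨W₀, hW₀, p, g, rfl⟩ := hUV.factorsThruClass_of_mem_bplus hX hU₀ b
    have hfp : f ≫ p⟦(1 : ℤ)⟧' = 0 := hST.hom_shift_eq_zero hS₀ hW₀.1 _
    rw [Functor.map_comp, reassoc_of% hfp, zero_comp]
  · intro hX
    obtain ⟨V₀, U₀, hV₀, hU₀, a, b, d, hK⟩ := hUV.exists_distTriang_to X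
    suffices hU₀T : U₀ ∈ T from ⟨V₀, U₀, hV₀, ⟨hU₀T, hU₀⟩, a, b, d, hK⟩
    refine hST.mem_right_of_hom_shift_eq_zero fun S₀ hS₀ f ↦ ?_
    obtain ⟨s, hs⟩ : ∃ s : S₀ ⟶ V₀⟦(1 : ℤ)⟧, f = s ≫ (-a⟦(1 : ℤ)⟧') :=
      Triangle.coyoneda_exact₁ _ (rot_of_distTriang _ hK) f (hX hS₀ hU₀ f b)
    rw [hs, hUV.hom_shift_eq_zero (hSU hS₀) hV₀ s, zero_comp]

theorem mem_bminus_iff {Y : C} :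
    Y ∈ Bminus C S (T ∩ U) ↔ ∀ ⦃T₀ V₀ : C⦄, T₀ ∈ T → V₀ ∈ V →
      ∀ (a : Y ⟶ T₀) (f : T₀ ⟶ V₀⟦(1 : ℤ)⟧), a ≫ f = 0 := by
  obtain ⟨hST, hUV, hSU⟩ := h
  constructor
  · intro hY T₀ V₀ hT₀ hV₀ a f
    obtain ⟨W₀, hW₀, g, p, rfl⟩ := hST.factorsThruClass_of_mem_bminus hY hT₀ a
    rw [Category.assoc, hUV.hom_shift_eq_zero hW₀.2 hV₀ (p ≫ f), comp_zero]
  · intro hY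
    obtain ⟨T₀, S₀, hT₀, hS₀, a, b, d, hK⟩ := hST.exists_distTriang_from Y
    suffices hT₀U : T₀ ∈ U from ⟨T₀, S₀, ⟨hT₀, hT₀U⟩, hS₀, a, b, d, hK⟩
    refine hUV.mem_left_of_hom_shift_eq_zero fun V₀ hV₀ f ↦ ?_
    obtain ⟨s, hs⟩ : ∃ s : S₀ ⟶ V₀⟦(1 : ℤ)⟧, f = b ≫ s :=
      Triangle.yoneda_exact₂ _ hK f (hY hT₀ hV₀ a f)
    rw [hs, hUV.hom_shift_eq_zero (hSU hS₀) hV₀ s, comp_zero]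

variable {A B X : C} {x : A ⟶ B} {y : B ⟶ X} {δ : X ⟶ A⟦(1 : ℤ)⟧}
  (hdist : Triangle.mk x y δ ∈ distTriang C)

include hdist

theorem mem_bplus_of_distTriang (hy : WEpic C (T ∩ U) y) (hA : A ∈ Bplus C V (T ∩ U))
    (hX : X ∈ Bplus C V (T ∩ U)) : B ∈ Bplus C V (T ∩ U) := by
  refine h.mem_bplus_iff.2 fun S₀ U₀ hS₀ hU₀ f b ↦ ?_
  have ⟨hST, hUV, _⟩ := h
  obtain ⟨W₀, hW₀, p, k, q, rfl⟩ :=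
    hy.exists_eq_comp_add_comp hdist (hUV.factorsThruClass_of_mem_bplus hX hU₀ (b ≫ y))
  have hfp : f ≫ p⟦(1 : ℤ)⟧' = 0 := hST.hom_shift_eq_zero hS₀ hW₀.1 _
  have hfq : f ≫ q⟦(1 : ℤ)⟧' = 0 := h.mem_bplus_iff.1 hA hS₀ hU₀ f q
  rw [Functor.map_add, Functor.map_comp, Functor.map_comp, Preadditive.comp_add,
    reassoc_of% hfp, reassoc_of% hfq, zero_comp, zero_comp, add_zero]

theorem mem_bminus_of_distTriang (hx : WMonic C (T ∩ U) x) (hA : A ∈ Bminus C S (T ∩ U))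
    (hX : X ∈ Bminus C S (T ∩ U)) : B ∈ Bminus C S (T ∩ U) := by
  refine h.mem_bminus_iff.2 fun T₀ V₀ hT₀ hV₀ a f ↦ ?_
  have ⟨hST, hUV, _⟩ := h
  obtain ⟨W₀, hW₀, k, p, q, rfl⟩ :=
    hx.exists_eq_comp_add_comp hdist (hST.factorsThruClass_of_mem_bminus hA hT₀ (x ≫ a))
  have hpf : p ≫ f = 0 := hUV.hom_shift_eq_zero hW₀.2 hV₀ _
  have hqf : q ≫ f = 0 := h.mem_bminus_iff.1 hX hT₀ hV₀ q f
  rw [Preadditive.add_comp, Category.assoc, Category.assoc, hpf, hqf, comp_zero, comp_zero,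
    add_zero]

end TwinCotorsionPair

end

/-- **Lemma 3.2.** Let `((S, T), (U, V))` be a twin cotorsion pair with `W = T ∩ U` and
let `A → B → X → A[1]` be a distinguished triangle with `x` `W`-monic and `y` `W`-epic.
If `A` and `X` belong to the heart `H = B⁺ ∩ B⁻`, then so does `B`. -/
theorem heart_stmt_4 {S T U V : Set C} (h : TwinCotorsionPair C S T U V)
    {A B X : C} (x : A ⟶ B) (y : B ⟶ X) (δ : X ⟶ A⟦(1 : ℤ)⟧)
    (hdist : Triangle.mk x y δ ∈ distTriang C)
    (hx : WMonic C (T ∩ U) x) (hy : WEpic C (T ∩ U) y)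
    (hA : A ∈ Heart C S V (T ∩ U)) (hX : X ∈ Heart C S V (T ∩ U)) :
    B ∈ Heart C S V (T ∩ U) :=
  ⟨h.mem_bplus_of_distTriang hdist hy hA.1 hX.1, h.mem_bminus_of_distTriang hdist hx hA.2 hX.2⟩
end

section
/- Let C be a triangulated category, ((S, T), (U, V)) a twin cotorsion pair on C, and W = T ∩ U. Let A →x B →y C →δ A[1] be a distinguished triangle with x W-monic and y W-epic, let f : A → D be any morphism, and let D →d E →e C →(δ ≫ f[1]) D[1] be any distinguished triangle whose connecting morphism is f[1] ∘ δ : C → D[1]. Then d is W-monic and e is W-epic. -/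
open CategoryTheory CategoryTheory.Limits CategoryTheory.Pretriangulated

universe v u

variable (C : Type u) [Category.{v} C] [Preadditive C] [HasZeroObject C] [HasShift C ℤ]
  [∀ n : ℤ, (shiftFunctor C n).Additive] [Pretriangulated C]

/-! In a distinguished triangle `A →x B →y X →δ A[1]`, a morphism `g : A ⟶ Z` factors through `x`
iff the pushforward `g_*δ` vanishes, and a morphism `g : Z ⟶ X` factors through `y` iff the
pullback `g^*δ` vanishes. Hence `W`-monicity of `x` and `W`-epicity of `y` are conditions on `δ`
alone, and both pass to `f_*δ` because `g_*(f_*δ) = (f ≫ g)_*δ` and `g^*(f_*δ) = f_*(g^*δ)`. -/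

section

variable {C} {W : Set C} {T : Triangle C}

theorem exists_mor₁_comp_eq_iff (hT : T ∈ distTriang C) {Z : C} (g : T.obj₁ ⟶ Z) :
    (∃ k : T.obj₂ ⟶ Z, T.mor₁ ≫ k = g) ↔ T.mor₃ ≫ g⟦(1 : ℤ)⟧' = 0 := by
  constructor
  · rintro ⟨k, rfl⟩
    rw [Functor.map_comp, comp_distTriang_mor_zero₃₁_assoc T hT, zero_comp]
  · intro hg
    obtain ⟨k, hk, -⟩ := complete_distinguished_triangle_morphism₂ T (contractibleTriangle Z)
      hT (contractible_distinguished Z) g 0 (hg.trans zero_comp.symm)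
    exact ⟨k, hk.trans (Category.comp_id g)⟩

theorem exists_comp_mor₂_eq_iff (hT : T ∈ distTriang C) {Z : C} (g : Z ⟶ T.obj₃) :
    (∃ k : Z ⟶ T.obj₂, k ≫ T.mor₂ = g) ↔ g ≫ T.mor₃ = 0 := by
  constructor
  · rintro ⟨k, rfl⟩
    rw [Category.assoc, comp_distTriang_mor_zero₂₃ T hT, comp_zero]
  · intro hg
    obtain ⟨k, hk⟩ := T.coyoneda_exact₃ hT g hg
    exact ⟨k, hk.symm⟩

theorem wMonic_mor₁_iff (hT : T ∈ distTriang C) :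
    WMonic C W T.mor₁ ↔
      ∀ ⦃Z : C⦄, Z ∈ W → ∀ g : T.obj₁ ⟶ Z, T.mor₃ ≫ g⟦(1 : ℤ)⟧' = 0 :=
  forall₃_congr fun _ _ g => exists_mor₁_comp_eq_iff hT g

theorem wEpic_mor₂_iff (hT : T ∈ distTriang C) :
    WEpic C W T.mor₂ ↔ ∀ ⦃Z : C⦄, Z ∈ W → ∀ g : Z ⟶ T.obj₃, g ≫ T.mor₃ = 0 :=
  forall₃_congr fun _ _ g => exists_comp_mor₂_eq_iff hT g

variable {A B X D E : C} {x : A ⟶ B} {y : B ⟶ X} {δ : X ⟶ A⟦(1 : ℤ)⟧}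
  {d : D ⟶ E} {e : E ⟶ X}

theorem WMonic.pushforward (hx : WMonic C W x) (hdist : Triangle.mk x y δ ∈ distTriang C)
    (f : A ⟶ D) (hdist' : Triangle.mk d e (δ ≫ f⟦(1 : ℤ)⟧') ∈ distTriang C) :
    WMonic C W d := by
  refine (wMonic_mor₁_iff hdist').2 fun Z hZ (g : D ⟶ Z) => ?_
  have hfg : δ ≫ (f ≫ g)⟦(1 : ℤ)⟧' = 0 := (wMonic_mor₁_iff hdist).1 hx hZ (f ≫ g)
  calc (δ ≫ f⟦(1 : ℤ)⟧') ≫ g⟦(1 : ℤ)⟧' = δ ≫ (f ≫ g)⟦(1 : ℤ)⟧' := by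
        rw [Functor.map_comp, Category.assoc]
    _ = 0 := hfg

theorem WEpic.pushforward (hy : WEpic C W y) (hdist : Triangle.mk x y δ ∈ distTriang C)
    (f : A ⟶ D) (hdist' : Triangle.mk d e (δ ≫ f⟦(1 : ℤ)⟧') ∈ distTriang C) :
    WEpic C W e := by
  refine (wEpic_mor₂_iff hdist').2 fun Z hZ (g : Z ⟶ X) => ?_
  have hg : g ≫ δ = 0 := (wEpic_mor₂_iff hdist).1 hy hZ g
  calc g ≫ δ ≫ f⟦(1 : ℤ)⟧' = (g ≫ δ) ≫ f⟦(1 : ℤ)⟧' := (Category.assoc _ _ _).symm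
    _ = 0 := by rw [hg, zero_comp]

theorem heart_stmt_5_general (hdist : Triangle.mk x y δ ∈ distTriang C)
    (hx : WMonic C W x) (hy : WEpic C W y) (f : A ⟶ D)
    (hdist' : Triangle.mk d e (δ ≫ f⟦(1 : ℤ)⟧') ∈ distTriang C) :
    WMonic C W d ∧ WEpic C W e :=
  ⟨hx.pushforward hdist f hdist', hy.pushforward hdist f hdist'⟩

end

/-- **Proposition 3.4(1).** Let `((S, T), (U, V))` be a twin cotorsion pair with
`W = T ∩ U`. Given a distinguished triangle `A →x B →y X →δ A[1]` with `x` `W`-monic and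
`y` `W`-epic, a morphism `f : A ⟶ D`, and a distinguished triangle
`D →d E →e X → D[1]` whose connecting morphism is `δ ≫ f[1]` (the pushforward `f_*δ`),
the morphism `d` is `W`-monic and `e` is `W`-epic. -/
theorem heart_stmt_5 {S T U V : Set C} (h : TwinCotorsionPair C S T U V)
    {A B X : C} (x : A ⟶ B) (y : B ⟶ X) (δ : X ⟶ A⟦(1 : ℤ)⟧)
    (hdist : Triangle.mk x y δ ∈ distTriang C)
    (hx : WMonic C (T ∩ U) x) (hy : WEpic C (T ∩ U) y)
    {D E : C} (f : A ⟶ D) (d : D ⟶ E) (e : E ⟶ X)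
    (hdist' : Triangle.mk d e (δ ≫ (shiftFunctor C (1 : ℤ)).map f) ∈ distTriang C) :
    WMonic C (T ∩ U) d ∧ WEpic C (T ∩ U) e :=
  heart_stmt_5_general hdist hx hy f hdist'
end

section
/- Let C be a triangulated category, ((S, T), (U, V)) a twin cotorsion pair on C, and W = T ∩ U. Suppose A →f B →f' C → A[1] and B →g D →g' F → B[1] are distinguished triangles in which f and g are W-monic and f' and g' are W-epic. Then g ∘ f is W-monic, and there exists a distinguished triangle A →(g∘f) D →e E → A[1] whose second morphism e is W-epic. -/
open CategoryTheory CategoryTheory.Limits CategoryTheory.Pretriangulated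

universe v u

variable (C : Type u) [Category.{v} C] [Preadditive C] [HasZeroObject C] [HasShift C ℤ]
  [∀ n : ℤ, (shiftFunctor C n).Additive] [Pretriangulated C]

/-!
In a distinguished triangle `A ⟶ B ⟶ X ⟶ A⟦1⟧`, the morphism `B ⟶ X` is `W`-epic exactly when the
connecting morphism `X ⟶ A⟦1⟧` kills every morphism from an object of `W`. Let `σ : E ⟶ A⟦1⟧` be
the connecting morphism of a triangle on `f ≫ g`. Completing `(f, 𝟙)` to a morphism from this
triangle to the one on `g` gives `m` with `σ ≫ f⟦1⟧ = m ≫ ρ`. For `w : W₀ ⟶ E` with `W₀` in `W`,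
the composite `w ≫ m ≫ ρ` vanishes, so `w ≫ σ` is killed by `f⟦1⟧`; hence `w ≫ σ` factors through
`δ`, and therefore vanishes.
-/

section

variable {C} {W : Set C}

omit [Preadditive C] [HasZeroObject C] [HasShift C ℤ]
  [∀ n : ℤ, (shiftFunctor C n).Additive] [Pretriangulated C] in
theorem WMonic.comp {A B D : C} {f : A ⟶ B} {g : B ⟶ D} (hf : WMonic C W f)
    (hg : WMonic C W g) : WMonic C W (f ≫ g) := by
  intro W₀ hW₀ a
  obtain ⟨b, rfl⟩ := hf hW₀ a
  obtain ⟨d, rfl⟩ := hg hW₀ b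
  exact ⟨d, Category.assoc f g d⟩

theorem wEpic_iff_forall_comp_eq_zero {A B X : C} {f : A ⟶ B} {f' : B ⟶ X}
    {δ : X ⟶ A⟦(1 : ℤ)⟧} (hT : Triangle.mk f f' δ ∈ distTriang C) :
    WEpic C W f' ↔ ∀ ⦃W₀ : C⦄, W₀ ∈ W → ∀ w : W₀ ⟶ X, w ≫ δ = 0 := by
  constructor
  · intro hf' W₀ hW₀ w
    obtain ⟨b, rfl⟩ := hf' hW₀ w
    have hzero : f' ≫ δ = 0 := comp_distTriang_mor_zero₂₃ _ hT
    rw [Category.assoc, hzero, comp_zero]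
  · intro hδ W₀ hW₀ w
    obtain ⟨b, hb⟩ := Triangle.coyoneda_exact₃ _ hT w (hδ hW₀ w)
    exact ⟨b, hb.symm⟩

theorem WEpic.of_distTriang_comp {A B D X F E : C} {f : A ⟶ B} {f' : B ⟶ X}
    {δ : X ⟶ A⟦(1 : ℤ)⟧} {g : B ⟶ D} {g' : D ⟶ F} {ρ : F ⟶ B⟦(1 : ℤ)⟧}
    {e : D ⟶ E} {σ : E ⟶ A⟦(1 : ℤ)⟧}
    (hT₁ : Triangle.mk f f' δ ∈ distTriang C) (hT₂ : Triangle.mk g g' ρ ∈ distTriang C)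
    (hT : Triangle.mk (f ≫ g) e σ ∈ distTriang C)
    (hf' : WEpic C W f') (hg' : WEpic C W g') : WEpic C W e := by
  rw [wEpic_iff_forall_comp_eq_zero hT₁] at hf'
  rw [wEpic_iff_forall_comp_eq_zero hT₂] at hg'
  rw [wEpic_iff_forall_comp_eq_zero hT]
  intro W₀ hW₀ w
  obtain ⟨m, hm⟩ : ∃ m : E ⟶ F, σ ≫ f⟦(1 : ℤ)⟧' = m ≫ ρ := by
    obtain ⟨m, -, hm⟩ :=
      complete_distinguished_triangle_morphism _ _ hT hT₂ f (𝟙 D) (Category.comp_id _)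
    exact ⟨m, hm⟩
  have hwσf : (w ≫ σ) ≫ f⟦(1 : ℤ)⟧' = 0 := by
    rw [Category.assoc, hm, ← Category.assoc, hg' hW₀]
  obtain ⟨k, hk⟩ : ∃ k : W₀ ⟶ X, w ≫ σ = k ≫ δ :=
    Triangle.coyoneda_exact₁ _ hT₁ (w ≫ σ) hwσf
  rw [hk, hf' hW₀]

theorem heart_stmt_6_general
    {A B X : C} (f : A ⟶ B) (f' : B ⟶ X) (δ : X ⟶ A⟦(1 : ℤ)⟧)
    (hdist₁ : Triangle.mk f f' δ ∈ distTriang C) (hf : WMonic C W f) (hf' : WEpic C W f')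
    {D F : C} (g : B ⟶ D) (g' : D ⟶ F) (ρ : F ⟶ B⟦(1 : ℤ)⟧)
    (hdist₂ : Triangle.mk g g' ρ ∈ distTriang C) (hg : WMonic C W g) (hg' : WEpic C W g') :
    WMonic C W (f ≫ g) ∧
      ∃ (E : C) (e : D ⟶ E) (σ : E ⟶ A⟦(1 : ℤ)⟧),
        (Triangle.mk (f ≫ g) e σ ∈ distTriang C) ∧ WEpic C W e := by
  obtain ⟨E, e, σ, hE⟩ := distinguished_cocone_triangle (f ≫ g)
  exact ⟨hf.comp hg, E, e, σ, hE, WEpic.of_distTriang_comp hdist₁ hdist₂ hE hf' hg'⟩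

end

/-- **Proposition 3.4(2).** Let `((S, T), (U, V))` be a twin cotorsion pair with
`W = T ∩ U`. Given distinguished triangles `A →f B →f' X → A[1]` and
`B →g D →g' F → B[1]` in which `f`, `g` are `W`-monic and `f'`, `g'` are `W`-epic,
the composite `f ≫ g` is `W`-monic and fits into a distinguished triangle
`A → D →e E → A[1]` whose second morphism `e` is `W`-epic. -/
theorem heart_stmt_6 {S T U V : Set C} (h : TwinCotorsionPair C S T U V)
    {A B X : C} (f : A ⟶ B) (f' : B ⟶ X) (δ : X ⟶ A⟦(1 : ℤ)⟧)
    (hdist₁ : Triangle.mk f f' δ ∈ distTriang C)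
    (hf : WMonic C (T ∩ U) f) (hf' : WEpic C (T ∩ U) f')
    {D F : C} (g : B ⟶ D) (g' : D ⟶ F) (ρ : F ⟶ B⟦(1 : ℤ)⟧)
    (hdist₂ : Triangle.mk g g' ρ ∈ distTriang C)
    (hg : WMonic C (T ∩ U) g) (hg' : WEpic C (T ∩ U) g') :
    WMonic C (T ∩ U) (f ≫ g) ∧
      ∃ (E : C) (e : D ⟶ E) (σ : E ⟶ A⟦(1 : ℤ)⟧),
        (Triangle.mk (f ≫ g) e σ ∈ distTriang C) ∧ WEpic C (T ∩ U) e := by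
  exact heart_stmt_6_general f f' δ hdist₁ hf hf' g g' ρ hdist₂ hg hg'
end

section
/- Let C be a triangulated category, W a class of objects of C, and A →x B →y C → A[1] a distinguished triangle. (i) If y is W-epic, then for every morphism z : D → B such that y ∘ z factors through an object of W, there exists d : D → A such that z − x ∘ d factors through an object of W. (ii) If x is W-monic, then for every morphism z : B → D such that z ∘ x factors through an object of W, there exists d : C → D such that z − d ∘ y factors through an object of W. (Thus, in the quotient of C by the ideal of morphisms factoring through W, the image of x is a weak kernel of the image of y and the image of y is a weak cokernel of the image of x.) -/
open CategoryTheory CategoryTheory.Limits CategoryTheory.Pretriangulated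

universe v u

variable (C : Type u) [Category.{v} C] [Preadditive C] [HasZeroObject C] [HasShift C ℤ]
  [∀ n : ℤ, (shiftFunctor C n).Additive] [Pretriangulated C]

/-! If `y` is `W`-epic, a factorization of `z ≫ y` through `W` lifts to a morphism `w` that still
factors through `W` and satisfies `w ≫ y = z ≫ y`. Hence `z - w` is killed by `y`, so exactness of
`Hom(D, -)` on the triangle writes it as `d ≫ x`, and `z - d ≫ x = w`. The second part is dual. -/

section

variable {𝓐 : Type*} [Category* 𝓐] {W : Set 𝓐} {A B X D : 𝓐}

lemma WEpic.exists_factorsThruClass_comp_eq {y : B ⟶ X} (hy : WEpic 𝓐 W y) {z : D ⟶ B}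
    (hz : FactorsThruClass 𝓐 W (z ≫ y)) :
    ∃ w : D ⟶ B, FactorsThruClass 𝓐 W w ∧ w ≫ y = z ≫ y := by
  obtain ⟨W₀, hW₀, g, h, hgh⟩ := hz
  obtain ⟨k, hk⟩ := hy hW₀ h
  exact ⟨g ≫ k, ⟨W₀, hW₀, g, k, rfl⟩, by rw [Category.assoc, hk, hgh]⟩

lemma WMonic.exists_factorsThruClass_comp_eq {x : A ⟶ B} (hx : WMonic 𝓐 W x) {z : B ⟶ D}
    (hz : FactorsThruClass 𝓐 W (x ≫ z)) :
    ∃ w : B ⟶ D, FactorsThruClass 𝓐 W w ∧ x ≫ w = x ≫ z := by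
  obtain ⟨W₀, hW₀, g, h, hgh⟩ := hz
  obtain ⟨k, hk⟩ := hx hW₀ g
  exact ⟨k ≫ h, ⟨W₀, hW₀, k, h, rfl⟩, by rw [reassoc_of% hk, hgh]⟩

variable [Preadditive 𝓐]

lemma WEpic.exists_factorsThruClass_sub_comp {x : A ⟶ B} {y : B ⟶ X} (hy : WEpic 𝓐 W y)
    (lift : ∀ f : D ⟶ B, f ≫ y = 0 → ∃ d : D ⟶ A, f = d ≫ x) {z : D ⟶ B}
    (hz : FactorsThruClass 𝓐 W (z ≫ y)) :
    ∃ d : D ⟶ A, FactorsThruClass 𝓐 W (z - d ≫ x) := by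
  obtain ⟨w, hw, hwy⟩ := hy.exists_factorsThruClass_comp_eq hz
  obtain ⟨d, hd⟩ := lift (z - w) (by rw [Preadditive.sub_comp, hwy, sub_self])
  exact ⟨d, by rwa [← hd, sub_sub_cancel]⟩

lemma WMonic.exists_factorsThruClass_sub_comp {x : A ⟶ B} {y : B ⟶ X} (hx : WMonic 𝓐 W x)
    (desc : ∀ f : B ⟶ D, x ≫ f = 0 → ∃ d : X ⟶ D, f = y ≫ d) {z : B ⟶ D}
    (hz : FactorsThruClass 𝓐 W (x ≫ z)) :
    ∃ d : X ⟶ D, FactorsThruClass 𝓐 W (z - y ≫ d) := by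
  obtain ⟨w, hw, hxw⟩ := hx.exists_factorsThruClass_comp_eq hz
  obtain ⟨d, hd⟩ := desc (z - w) (by rw [Preadditive.comp_sub, hxw, sub_self])
  exact ⟨d, by rwa [← hd, sub_sub_cancel]⟩

end

theorem heart_stmt_7_general {𝓐 : Type*} [Category* 𝓐] [Preadditive 𝓐] (W : Set 𝓐)
    {A B X : 𝓐} (x : A ⟶ B) (y : B ⟶ X)
    (lift : ∀ (D : 𝓐) (f : D ⟶ B), f ≫ y = 0 → ∃ d : D ⟶ A, f = d ≫ x)
    (desc : ∀ (D : 𝓐) (f : B ⟶ D), x ≫ f = 0 → ∃ d : X ⟶ D, f = y ≫ d) :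
    (WEpic 𝓐 W y → ∀ (D : 𝓐) (z : D ⟶ B), FactorsThruClass 𝓐 W (z ≫ y) →
      ∃ d : D ⟶ A, FactorsThruClass 𝓐 W (z - d ≫ x)) ∧
    (WMonic 𝓐 W x → ∀ (D : 𝓐) (z : B ⟶ D), FactorsThruClass 𝓐 W (x ≫ z) →
      ∃ d : X ⟶ D, FactorsThruClass 𝓐 W (z - y ≫ d)) :=
  ⟨fun hy D _ hz ↦ hy.exists_factorsThruClass_sub_comp (lift D) hz,
    fun hx D _ hz ↦ hx.exists_factorsThruClass_sub_comp (desc D) hz⟩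

/-- **Lemma 3.6** (object-level form). Let `W` be a class of objects and
`A →x B →y X →δ A[1]` a distinguished triangle.
(i) If `y` is `W`-epic and `z : D ⟶ B` is such that `z ≫ y` factors through an object
of `W`, then there is `d : D ⟶ A` with `z - d ≫ x` factoring through an object of `W`.
(ii) If `x` is `W`-monic and `z : B ⟶ D` is such that `x ≫ z` factors through an object
of `W`, then there is `d : X ⟶ D` with `z - y ≫ d` factoring through an object of `W`.
Thus in the quotient by morphisms factoring through `W`, the image of `x` is a weak
kernel of the image of `y`, and the image of `y` a weak cokernel of the image of `x`. -/
theorem heart_stmt_7 (W : Set C)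
    {A B X : C} (x : A ⟶ B) (y : B ⟶ X) (δ : X ⟶ A⟦(1 : ℤ)⟧)
    (hdist : Triangle.mk x y δ ∈ distTriang C) :
    (WEpic C W y → ∀ (D : C) (z : D ⟶ B), FactorsThruClass C W (z ≫ y) →
      ∃ d : D ⟶ A, FactorsThruClass C W (z - d ≫ x)) ∧
    (WMonic C W x → ∀ (D : C) (z : B ⟶ D), FactorsThruClass C W (x ≫ z) →
      ∃ d : X ⟶ D, FactorsThruClass C W (z - y ≫ d)) :=
  heart_stmt_7_general W x y
    (fun _ ↦ Triangle.coyoneda_exact₂ _ hdist) (fun _ ↦ Triangle.yoneda_exact₂ _ hdist)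
end

section
/- Let C be a triangulated category, ((S, T), (U, V)) a twin cotorsion pair on C, and W = T ∩ U. Let A →x B →y C →δ A[1] be a distinguished triangle with δ ≠ 0 (i.e., nonsplit), x W-monic, y W-epic, and A, B, C ∈ H = B⁺ ∩ B⁻. Then none of A, B, C belongs to W. -/
open CategoryTheory CategoryTheory.Limits CategoryTheory.Pretriangulated

universe v u

variable (C : Type u) [Category.{v} C] [Preadditive C] [HasZeroObject C] [HasShift C ℤ]
  [∀ n : ℤ, (shiftFunctor C n).Additive] [Pretriangulated C]

/-!
A distinguished triangle has zero connecting morphism as soon as its first morphism is mono or its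
second is epi. If `A ∈ W`, then `𝟙 A` factors through the `W`-monic `x`, so `x` is mono; dually
for `X`.

For `B`, suppose that `Hom(S, B[1]) = 0`, and let `f : A ⟶ W₀` be the first morphism of a triangle
exhibiting `A ∈ B⁻`, with connecting morphism `ε : S₀ ⟶ A[1]`. Then `ε = d ≫ δ` for some
`d : S₀ ⟶ X`. Since `Hom(S, V[1]) = 0`, the morphism `d` factors through the object of `W` that
covers `X ∈ B⁺`, hence through the `W`-epic `y`. So `ε = 0`, and `f` is mono; as `f` factors
through the `W`-monic `x`, so is `x`. The case `Hom(B, V[1]) = 0` is dual.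
-/

/-- The orthogonality condition `Hom(P, Q[1]) = 0` between two classes of objects, as required of
the two halves of a cotorsion pair. The condition on a single object is expressed with a
singleton class. -/
def ShiftOrthogonal (P Q : Set C) : Prop :=
  ∀ ⦃X Y : C⦄, X ∈ P → Y ∈ Q → ∀ f : X ⟶ Y⟦(1 : ℤ)⟧, f = 0

theorem WMonic.mono {D : Type u} [Category.{v} D] {W : Set D} {A B : D} {x : A ⟶ B}
    (hx : WMonic D W x) (hA : A ∈ W) : Mono x := by
  obtain ⟨r, hr⟩ := hx hA (𝟙 A)
  exact mono_of_mono_fac hr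

theorem WEpic.epi {D : Type u} [Category.{v} D] {W : Set D} {B X : D} {y : B ⟶ X}
    (hy : WEpic D W y) (hX : X ∈ W) : Epi y := by
  obtain ⟨s, hs⟩ := hy hX (𝟙 X)
  exact epi_of_epi_fac hs

section

variable {C}

theorem triangle_yoneda_exact₁ (T : Triangle C) (hT : T ∈ distTriang C) {Y : C} (f : T.obj₁ ⟶ Y)
    (hf : T.mor₃ ≫ f⟦(1 : ℤ)⟧' = 0) : ∃ g : T.obj₂ ⟶ Y, f = T.mor₁ ≫ g := by
  obtain ⟨g', hg'⟩ : ∃ g' : T.obj₂⟦(1 : ℤ)⟧ ⟶ Y⟦(1 : ℤ)⟧, f⟦(1 : ℤ)⟧' = (-T.mor₁⟦(1 : ℤ)⟧') ≫ g' :=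
    T.rotate.yoneda_exact₃ (rot_of_distTriang _ hT) _ hf
  obtain ⟨g, rfl⟩ := (shiftFunctor C (1 : ℤ)).map_surjective g'
  refine ⟨-g, (shiftFunctor C (1 : ℤ)).map_injective ?_⟩
  rw [hg', Preadditive.neg_comp, Preadditive.comp_neg, Functor.map_neg, Functor.map_comp]

variable {S V W : Set C} {A B X : C} {x : A ⟶ B} {y : B ⟶ X} {δ : X ⟶ A⟦(1 : ℤ)⟧}

theorem WMonic.of_mem_Bminus (hx : WMonic C W x) (hA : A ∈ Bminus C S W)
    (hSV : ShiftOrthogonal C S V) : WMonic C V x := by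
  obtain ⟨W₀, S₀, hW₀, hS₀, f, _, ε, hT⟩ := hA
  intro V₀ hV₀ a
  obtain ⟨a', rfl⟩ := triangle_yoneda_exact₁ _ hT a (hSV hS₀ hV₀ _)
  obtain ⟨b, rfl⟩ := hx hW₀ f
  exact ⟨b ≫ a', (Category.assoc _ _ _).symm⟩

theorem WEpic.of_mem_Bplus (hy : WEpic C W y) (hX : X ∈ Bplus C V W)
    (hSV : ShiftOrthogonal C S V) : WEpic C S y := by
  obtain ⟨V₀, W₀, hV₀, hW₀, _, g, ε, hT⟩ := hX
  intro S₀ hS₀ c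
  obtain ⟨c', rfl⟩ := Triangle.coyoneda_exact₃ _ hT c (hSV hS₀ hV₀ _)
  obtain ⟨b, rfl⟩ := hy hW₀ g
  exact ⟨c' ≫ b, Category.assoc _ _ _⟩

theorem mono_of_shiftOrthogonal (hdist : Triangle.mk x y δ ∈ distTriang C)
    (hx : WMonic C W x) (hy : WEpic C S y) (hA : A ∈ Bminus C S W)
    (hSB : ShiftOrthogonal C S {B}) : Mono x := by
  obtain ⟨W₀, S₀, hW₀, hS₀, f, _, ε, hT⟩ := hA
  have hyδ : y ≫ δ = 0 := comp_distTriang_mor_zero₂₃ _ hdist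
  have hε : ε = 0 := by
    obtain ⟨d, hd⟩ : ∃ d : S₀ ⟶ X, ε = d ≫ δ :=
      Triangle.coyoneda_exact₁ _ hdist ε (hSB hS₀ rfl _)
    obtain ⟨e, rfl⟩ := hy hS₀ d
    rw [hd, Category.assoc, hyδ, comp_zero]
  have : Mono f := Triangle.mono₁ _ hT hε
  obtain ⟨b, hb⟩ := hx hW₀ f
  exact mono_of_mono_fac hb

theorem epi_of_shiftOrthogonal (hdist : Triangle.mk x y δ ∈ distTriang C)
    (hx : WMonic C V x) (hy : WEpic C W y) (hX : X ∈ Bplus C V W)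
    (hBV : ShiftOrthogonal C {B} V) : Epi y := by
  obtain ⟨V₀, W₀, hV₀, hW₀, _, g, ε, hT⟩ := hX
  have hδx : δ ≫ x⟦(1 : ℤ)⟧' = 0 := comp_distTriang_mor_zero₃₁ _ hdist
  have hε : ε = 0 := by
    obtain ⟨d', hd'⟩ : ∃ d' : A⟦(1 : ℤ)⟧ ⟶ V₀⟦(1 : ℤ)⟧, ε = δ ≫ d' :=
      Triangle.yoneda_exact₃ _ hdist ε (hBV rfl hV₀ _)
    obtain ⟨d, rfl⟩ := (shiftFunctor C (1 : ℤ)).map_surjective d'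
    obtain ⟨e, rfl⟩ := hx hV₀ d
    rw [hd', Functor.map_comp, ← Category.assoc, hδx, zero_comp]
  have : Epi g := Triangle.epi₂ _ hT hε
  obtain ⟨b, hb⟩ := hy hW₀ g
  exact epi_of_epi_fac hb

end

theorem heart_stmt_8_general {S V W : Set C} (hSV : ShiftOrthogonal C S V)
    {A B X : C} (x : A ⟶ B) (y : B ⟶ X) (δ : X ⟶ A⟦(1 : ℤ)⟧)
    (hdist : Triangle.mk x y δ ∈ distTriang C) (hδ : δ ≠ 0)
    (hx : WMonic C W x) (hy : WEpic C W y)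
    (hA : A ∈ Bminus C S W) (hX : X ∈ Bplus C V W) :
    A ∉ W ∧ ¬ ShiftOrthogonal C S {B} ∧ ¬ ShiftOrthogonal C {B} V ∧ X ∉ W := by
  have hx_not_mono : ¬ Mono x := fun h => hδ (Triangle.mor₃_eq_zero_of_mono₁ _ hdist h)
  have hy_not_epi : ¬ Epi y := fun h => hδ (Triangle.mor₃_eq_zero_of_epi₂ _ hdist h)
  refine ⟨fun hAW => hx_not_mono (hx.mono hAW), fun hSB => hx_not_mono ?_,
    fun hBV => hy_not_epi ?_, fun hXW => hy_not_epi (hy.epi hXW)⟩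
  · exact mono_of_shiftOrthogonal hdist hx (hy.of_mem_Bplus hX hSV) hA hSB
  · exact epi_of_shiftOrthogonal hdist (hx.of_mem_Bminus hA hSV) hy hX hBV

/-- **Corollary 3.7.** Let `((S, T), (U, V))` be a twin cotorsion pair with `W = T ∩ U`,
and let `A →x B →y X →δ A[1]` be a nonsplit (`δ ≠ 0`) distinguished triangle with `x`
`W`-monic, `y` `W`-epic, and `A, B, X` in the heart `H = B⁺ ∩ B⁻`. Then none of
`A`, `B`, `X` belongs to `W`. -/
theorem heart_stmt_8 {S T U V : Set C} (h : TwinCotorsionPair C S T U V)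
    {A B X : C} (x : A ⟶ B) (y : B ⟶ X) (δ : X ⟶ A⟦(1 : ℤ)⟧)
    (hdist : Triangle.mk x y δ ∈ distTriang C) (hδ : δ ≠ 0)
    (hx : WMonic C (T ∩ U) x) (hy : WEpic C (T ∩ U) y)
    (hA : A ∈ Heart C S V (T ∩ U)) (hB : B ∈ Heart C S V (T ∩ U))
    (hX : X ∈ Heart C S V (T ∩ U)) :
    A ∉ T ∩ U ∧ B ∉ T ∩ U ∧ X ∉ T ∩ U := by
  obtain ⟨⟨_, _, _, _, hST, _⟩, ⟨_, _, _, _, hUV, _⟩, hSU⟩ := h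
  obtain ⟨hAW, hSB, _, hXW⟩ := heart_stmt_8_general C (fun _ _ hS hV => hUV (hSU hS) hV)
    x y δ hdist hδ hx hy hA.2 hX.1
  exact ⟨hAW, fun hBW => hSB (by rintro Z _ hZ rfl; exact hST hZ hBW.1), hXW⟩
end

section
/- Let C be a triangulated category and ((S, T), (U, V)) a twin cotorsion pair on C with W = T ∩ U. Define B₁⁺ as the class of objects X admitting a distinguished triangle T → M → X → T[1] with T ∈ T and M ∈ S ∩ T, B₁⁻ as the class of objects Y admitting a distinguished triangle Y → M' → S → Y[1] with M' ∈ S ∩ T and S ∈ S, and H₁ = B₁⁺ ∩ B₁⁻. Then for any morphism f : A → B with A, B ∈ H₁, f factors through an object of W if and only if f factors through an object of S ∩ T. -/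
open CategoryTheory CategoryTheory.Limits CategoryTheory.Pretriangulated

universe v u

variable (C : Type u) [Category.{v} C] [Preadditive C] [HasZeroObject C] [HasShift C ℤ]
  [∀ n : ℤ, (shiftFunctor C n).Additive] [Pretriangulated C]

/-! If `A → M → S → A⟦1⟧` is distinguished and `Hom(S, X⟦1⟧) = 0` for every `X` in a class `D`,
then every morphism from `A` to an object of `D` extends along `A → M`. Hence every morphism out of
`A` that factors through an object of `D` already factors through `M`. -/

/-- The orthogonality `Ext¹(D, E) = 0` for classes of objects of a triangulated category, where
`Ext¹(X, Y)` is encoded as `X ⟶ Y⟦1⟧`; it is the vanishing condition on a cotorsion pair. -/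
def ExtOrthogonal (D E : Set C) : Prop :=
  ∀ ⦃X Y : C⦄, X ∈ D → Y ∈ E → ∀ f : X ⟶ Y⟦(1 : ℤ)⟧, f = 0

section

variable {𝒞 : Type*} [Category 𝒞]

theorem FactorsThruClass.mono {D E : Set 𝒞} {X Y : 𝒞} {f : X ⟶ Y}
    (hf : FactorsThruClass 𝒞 D f) (hDE : D ⊆ E) : FactorsThruClass 𝒞 E f :=
  let ⟨W, hW, hfac⟩ := hf
  ⟨W, hDE hW, hfac⟩

theorem WMonic.factorsThruClass {D E : Set 𝒞} {X Y M : 𝒞} {x : X ⟶ M} (hx : WMonic 𝒞 D x)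
    (hM : M ∈ E) {f : X ⟶ Y} (hf : FactorsThruClass 𝒞 D f) : FactorsThruClass 𝒞 E f := by
  obtain ⟨W, hW, g, k, rfl⟩ := hf
  obtain ⟨m, rfl⟩ := hx hW g
  exact ⟨M, hM, x, m ≫ k, (Category.assoc x m k).symm⟩

theorem ExtOrthogonal.mono_right [Preadditive 𝒞] [HasShift 𝒞 ℤ] {D E E' : Set 𝒞}
    (h : ExtOrthogonal 𝒞 D E) (hE : E' ⊆ E) : ExtOrthogonal 𝒞 D E' :=
  fun _ _ hX hY => h hX (hE hY)

end

section

variable {C}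

theorem CotorsionPair.extOrthogonal {U V : Set C} (h : CotorsionPair C U V) :
    ExtOrthogonal C U V :=
  h.2.2.2.2.1

theorem exists_eq_mor₁_comp_of_mor₃_comp_shift_eq_zero {T : Triangle C} (hT : T ∈ distTriang C)
    {X : C} (g : T.obj₁ ⟶ X) (hg : T.mor₃ ≫ g⟦(1 : ℤ)⟧' = 0) :
    ∃ m : T.obj₂ ⟶ X, g = T.mor₁ ≫ m := by
  obtain ⟨m, hm, -⟩ := complete_distinguished_triangle_morphism₂ T _ hT
    (contractible_distinguished X) g 0 (hg.trans zero_comp.symm)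
  exact ⟨m, (Category.comp_id g).symm.trans hm.symm⟩

theorem ExtOrthogonal.wMonic_mor₁ {S D : Set C} (h : ExtOrthogonal C S D) {T : Triangle C}
    (hT : T ∈ distTriang C) (hS : T.obj₃ ∈ S) : WMonic C D T.mor₁ := by
  intro W hW g
  obtain ⟨m, rfl⟩ := exists_eq_mor₁_comp_of_mor₃_comp_shift_eq_zero hT g (h hS hW _)
  exact ⟨m, rfl⟩

theorem ExtOrthogonal.exists_wMonic_of_mem_bminus {S D M : Set C} (h : ExtOrthogonal C S D)
    {A : C} (hA : A ∈ Bminus C S M) : ∃ M₀ ∈ M, ∃ x : A ⟶ M₀, WMonic C D x := by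
  obtain ⟨M₀, S₀, hM₀, hS₀, x, y, δ, hT⟩ := hA
  exact ⟨M₀, hM₀, x, h.wMonic_mor₁ hT hS₀⟩

theorem heart_stmt_10_general {S M D : Set C} (hSD : ExtOrthogonal C S D) (hMD : M ⊆ D)
    {A B : C} (f : A ⟶ B) (hA : A ∈ Bminus C S M) :
    FactorsThruClass C D f ↔ FactorsThruClass C M f := by
  obtain ⟨M₀, hM₀, x, hx⟩ := hSD.exists_wMonic_of_mem_bminus hA
  exact ⟨hx.factorsThruClass hM₀, fun hf => hf.mono hMD⟩

end

/-- **Lemma 4.2(1).** Let `((S, T), (U, V))` be a twin cotorsion pair with `W = T ∩ U`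
and let `H₁ = B₁⁺ ∩ B₁⁻` be the heart of `(S, T)`. A morphism `f : A ⟶ B` with
`A, B ∈ H₁` factors through an object of `W` if and only if it factors through an
object of `S ∩ T`. -/
theorem heart_stmt_10 {S T U V : Set C} (h : TwinCotorsionPair C S T U V)
    {A B : C} (f : A ⟶ B)
    (hA : A ∈ Bplus C T (S ∩ T) ∩ Bminus C S (S ∩ T))
    (hB : B ∈ Bplus C T (S ∩ T) ∩ Bminus C S (S ∩ T)) :
    FactorsThruClass C (T ∩ U) f ↔ FactorsThruClass C (S ∩ T) f := by
  have hSW : ExtOrthogonal C S (T ∩ U) := h.1.extOrthogonal.mono_right Set.inter_subset_left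
  exact heart_stmt_10_general hSW (fun _ hX => ⟨hX.2, h.2.2 hX.1⟩) f hA.2
end

section
/- Let C be a triangulated category and let A →x B →y C →δ A[1] be a distinguished triangle with δ ≠ 0, such that x is left almost split (every morphism a : A → M that is not a split monomorphism factors through x) and y is right almost split (every morphism c : N → C that is not a split epimorphism factors through y). If the endomorphism ring of C is local, then x is left minimal (every b : B → B with b ∘ x = x is an isomorphism); dually, if the endomorphism ring of A is local, then y is right minimal (every b : B → B with y ∘ b = y is an isomorphism). -/
open CategoryTheory CategoryTheory.Limits CategoryTheory.Pretriangulated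

universe v u

variable (C : Type u) [Category.{v} C] [Preadditive C] [HasZeroObject C] [HasShift C ℤ]
  [∀ n : ℤ, (shiftFunctor C n).Additive] [Pretriangulated C]

/-! An endomorphism `b` of the middle term with `x ≫ b = x` extends to an endomorphism
`(𝟙 A, b, c)` of the triangle, so `c ≫ δ = δ`. As `(𝟙 X - c) ≫ δ = 0` with `δ ≠ 0`, the element
`1 - c` of the local ring `End X` is not a unit, hence `c` is one, and `b` is an isomorphism because
the two outer components are. The dual argument passes from `End A` to `End A⟦1⟧`. -/

section Minimal

variable {D : Type*} [Category* D] {X Y : D}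

/-- A left minimal morphism: every endomorphism of the target fixing it is invertible. This makes
a left almost split morphism out of a given object unique up to isomorphism. -/
def LeftMinimal (f : X ⟶ Y) : Prop :=
  ∀ b : Y ⟶ Y, f ≫ b = f → IsIso b

/-- A right minimal morphism, the notion dual to `LeftMinimal`: every endomorphism of the source
fixing it is invertible. -/
def RightMinimal (f : X ⟶ Y) : Prop :=
  ∀ b : X ⟶ X, b ≫ f = f → IsIso b

variable [Preadditive D]

lemma isIso_or_isIso_id_sub [IsLocalRing (End X)] (f : X ⟶ X) : IsIso f ∨ IsIso (𝟙 X - f) :=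
  (IsLocalRing.isUnit_or_isUnit_of_add_one (R := End X) (add_sub_cancel f (𝟙 X))).imp
    (isUnit_iff_isIso _).1 (isUnit_iff_isIso _).1

lemma leftMinimal_of_isLocalRing_end [IsLocalRing (End Y)] {f : X ⟶ Y} (hf : f ≠ 0) :
    LeftMinimal f := by
  intro b hb
  have hzero : f ≫ (𝟙 Y - b) = 0 := by
    rw [Preadditive.comp_sub, Category.comp_id, hb, sub_self]
  exact (isIso_or_isIso_id_sub b).resolve_right fun _ ↦ hf (zero_of_comp_mono _ hzero)

lemma rightMinimal_of_isLocalRing_end [IsLocalRing (End X)] {f : X ⟶ Y} (hf : f ≠ 0) :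
    RightMinimal f := by
  intro b hb
  have hzero : (𝟙 X - b) ≫ f = 0 := by
    rw [Preadditive.sub_comp, Category.id_comp, hb, sub_self]
  exact (isIso_or_isIso_id_sub b).resolve_right fun _ ↦ hf (zero_of_epi_comp _ hzero)

lemma isLocalRing_end_obj {E : Type*} [Category* E] [Preadditive E] (F : D ⥤ E) [F.Additive]
    [F.Full] [F.Faithful] (X : D) [IsLocalRing (End X)] : IsLocalRing (End (F.obj X)) :=
  let e : End X ≃+* End (F.obj X) :=
    { (Functor.FullyFaithful.ofFullyFaithful F).mulEquivEnd X with
      map_add' _ _ := F.map_add }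
  (e.symm : End (F.obj X) →+* End X).domain_isLocalRing

end Minimal

section Triangle

variable {C} {T : Triangle C}

lemma leftMinimal_mor₁_of_rightMinimal_mor₃ (hT : T ∈ distTriang C)
    (h : RightMinimal T.mor₃) : LeftMinimal T.mor₁ := by
  intro b hb
  have comm₁ : T.mor₁ ≫ b = 𝟙 T.obj₁ ≫ T.mor₁ := by rw [hb, Category.id_comp]
  obtain ⟨c, comm₂, comm₃⟩ :=
    complete_distinguished_triangle_morphism T T hT hT (𝟙 T.obj₁) b comm₁
  have hc : IsIso c := h c (by rw [← comm₃, CategoryTheory.Functor.map_id, Category.comp_id])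
  exact isIso₂_of_isIso₁₃ (Triangle.homMk T T (𝟙 T.obj₁) b c comm₁ comm₂ comm₃) hT hT
    (IsIso.id T.obj₁) hc

lemma rightMinimal_mor₂_of_leftMinimal_mor₃ (hT : T ∈ distTriang C)
    (h : LeftMinimal T.mor₃) : RightMinimal T.mor₂ := by
  intro b hb
  have comm₂ : T.mor₂ ≫ 𝟙 T.obj₃ = b ≫ T.mor₂ := by rw [hb, Category.comp_id]
  obtain ⟨a, comm₁, comm₃⟩ :=
    complete_distinguished_triangle_morphism₁ T T hT hT b (𝟙 T.obj₃) comm₂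
  have hshift : IsIso (a⟦(1 : ℤ)⟧') := h _ (by rw [comm₃, Category.id_comp])
  have ha : IsIso a := isIso_of_reflects_iso a (shiftFunctor C (1 : ℤ))
  exact isIso₂_of_isIso₁₃ (Triangle.homMk T T a b (𝟙 T.obj₃) comm₁ comm₂ comm₃) hT hT
    ha (IsIso.id T.obj₃)

end Triangle

theorem heart_stmt_11_general {A B X : C} (x : A ⟶ B) (y : B ⟶ X) (δ : X ⟶ A⟦(1 : ℤ)⟧)
    (hdist : Triangle.mk x y δ ∈ distTriang C) (hδ : δ ≠ 0) :
    (IsLocalRing (End X) → LeftMinimal x) ∧ (IsLocalRing (End A) → RightMinimal y) := by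
  constructor
  · intro _
    have hmin : RightMinimal δ := rightMinimal_of_isLocalRing_end hδ
    exact leftMinimal_mor₁_of_rightMinimal_mor₃ hdist hmin
  · intro _
    have : IsLocalRing (End (A⟦(1 : ℤ)⟧)) := isLocalRing_end_obj (shiftFunctor C (1 : ℤ)) A
    have hmin : LeftMinimal δ := leftMinimal_of_isLocalRing_end hδ
    exact rightMinimal_mor₂_of_leftMinimal_mor₃ hdist hmin

/-- **Lemma 5.5** (triangulated case). Let `A →x B →y X →δ A[1]` be a distinguished
triangle with `δ ≠ 0`, `x` left almost split and `y` right almost split. If the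
endomorphism ring of `X` is local then `x` is left minimal, and if the endomorphism
ring of `A` is local then `y` is right minimal. -/
theorem heart_stmt_11 {A B X : C} (x : A ⟶ B) (y : B ⟶ X) (δ : X ⟶ A⟦(1 : ℤ)⟧)
    (hdist : Triangle.mk x y δ ∈ distTriang C) (hδ : δ ≠ 0)
    (hx : LeftAlmostSplit C x) (hy : RightAlmostSplit C y) :
    (IsLocalRing (End X) → ∀ b : B ⟶ B, x ≫ b = x → IsIso b) ∧
    (IsLocalRing (End A) → ∀ b : B ⟶ B, b ≫ y = y → IsIso b) :=
  heart_stmt_11_general C x y δ hdist hδ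
end
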